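/- arXiv:2301.09705 — 4 statements merged into one kernel-verified Lean document; each statement's English description precedes it below -/
import Mathlib

section
/- Let β ≥ 0, ε > 0, V > 0, S > 0 be real numbers, let ρ(s) = (V/ε)|s−1|^β, and for a ∈ ℝ let r(a) = 1 + sign(a)·(ε(β+1)|a|/V)^{1/(β+1)}. Then for every a ∈ ℝ the transaction loss satisfies S·|∫_1^{r(a)} s·ρ(s) ds − a| = S · (V/(ε(β+2))) · (ε(β+1)|a|/V)^{(β+2)/(β+1)}; in particular the loss equals c · S · V^{−1/(β+1)} · |a|^{(β+2)/(β+1)} where c = (β+1)^{(β+2)/(β+1)} ε^{1/(β+1)} / (β+2) is a positive constant depending only on ε and β. -/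
/-!
Substituting `s = 1 + σ u` with `σ = ±1` the sign of the order, the integral of `s ρ(s)` splits into
`σ ∫ ρ`, which is the number of shares `a` by the choice of `r(a)`, and a first-moment term
`(V/ε) x^(β+2)/(β+2)` with `x = |r(a) - 1|`. The latter is nonnegative and is the loss per unit of
mid price. The second form follows by distributing the power
`(β+2)/(β+1) = 1 + 1/(β+1)` over `ε (β+1) |a| / V`.
-/

/-- Dollar value (at unit mid price) of the orders between relative prices `1` and `1 + σ x`, for
`σ = ±1`: the first summand is the signed number of shares, the second the cost of walking the
book. -/
lemma integral_mul_power_law_density {β K x σ : ℝ} (hβ : 0 ≤ β) (hx : 0 ≤ x) (hσ : σ * σ = 1) :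
    (∫ s in (1 : ℝ)..(1 + σ * x), s * (K * |s - 1| ^ β))
      = σ * (K * x ^ (β + 1) / (β + 1)) + K * x ^ (β + 2) / (β + 2) := by
  have habs : |σ| = 1 := by
    rcases mul_self_eq_one_iff.mp hσ with h | h <;> simp [h]
  have hsub := intervalIntegral.mul_integral_comp_add_mul
    (a := 0) (b := x) (f := fun s : ℝ => s * (K * |s - 1| ^ β)) (c := σ) (d := 1)
  rw [mul_zero, add_zero] at hsub
  rw [← hsub]
  have hcongr : (∫ u in (0 : ℝ)..x, (1 + σ * u) * (K * |1 + σ * u - 1| ^ β))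
      = ∫ u in (0 : ℝ)..x, (K * u ^ β + σ * K * u ^ (β + 1)) := by
    apply intervalIntegral.integral_congr
    intro u hu
    rw [Set.uIcc_of_le hx] at hu
    have h1 : |1 + σ * u - 1| = u := by
      rw [add_sub_cancel_left, abs_mul, habs, one_mul, abs_of_nonneg hu.1]
    have h2 : u ^ (β + 1) = u ^ β * u := by
      rw [Real.rpow_add_one' hu.1 (by linarith)]
    simp only [h1, h2]
    ring
  have hi1 : IntervalIntegrable (fun u : ℝ => u ^ β) MeasureTheory.volume 0 x :=
    intervalIntegral.intervalIntegrable_rpow' (by linarith)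
  have hi2 : IntervalIntegrable (fun u : ℝ => u ^ (β + 1)) MeasureTheory.volume 0 x :=
    intervalIntegral.intervalIntegrable_rpow' (by linarith)
  rw [hcongr, intervalIntegral.integral_add (hi1.const_mul _) (hi2.const_mul _),
    intervalIntegral.integral_const_mul, intervalIntegral.integral_const_mul,
    integral_rpow (Or.inl (by linarith)), integral_rpow (Or.inl (by linarith)),
    Real.zero_rpow (by linarith), Real.zero_rpow (by linarith),
    show β + 1 + 1 = β + 2 by ring]
  linear_combination (K * x ^ (β + 2) / (β + 2)) * hσ

/-- **Transaction loss from walking the order book.**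
For the power-law order book `ρ(s) = (V/ε)|s−1|^β` and the impacted relative price
`r(a) = 1 + sign(a)·(ε(β+1)|a|/V)^{1/(β+1)}`, the dollar loss
`S·|∫_1^{r(a)} s·ρ(s) ds − a|` equals `S·(V/(ε(β+2)))·(ε(β+1)|a|/V)^{(β+2)/(β+1)}`;
in particular it equals `c·S·V^{−1/(β+1)}·|a|^{(β+2)/(β+1)}` where
`c = (β+1)^{(β+2)/(β+1)} ε^{1/(β+1)} / (β+2) > 0` depends only on `ε` and `β`. -/
theorem order_book_transaction_loss
    (β ε V S : ℝ) (hβ : 0 ≤ β) (hε : 0 < ε) (hV : 0 < V) (hS : 0 < S)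
    (ρ : ℝ → ℝ) (hρ : ∀ s : ℝ, ρ s = (V / ε) * |s - 1| ^ β)
    (r : ℝ → ℝ)
    (hr : ∀ a : ℝ,
      r a = 1 + Real.sign a * (ε * (β + 1) * |a| / V) ^ ((1 : ℝ) / (β + 1))) :
    ∀ a : ℝ,
      (S * |(∫ s in (1 : ℝ)..(r a), s * ρ s) - a|
          = S * (V / (ε * (β + 2))) * (ε * (β + 1) * |a| / V) ^ ((β + 2) / (β + 1))) ∧
      (∃ c : ℝ,
        c = (β + 1) ^ ((β + 2) / (β + 1)) * ε ^ ((1 : ℝ) / (β + 1)) / (β + 2) ∧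
        0 < c ∧
        S * |(∫ s in (1 : ℝ)..(r a), s * ρ s) - a|
          = c * S * V ^ (-(1 : ℝ) / (β + 1)) * |a| ^ ((β + 2) / (β + 1))) := by
  intro a
  have hb1 : 0 < β + 1 := by linarith
  have hb2 : 0 < β + 2 := by linarith
  have hy : 0 ≤ ε * (β + 1) * |a| / V := by positivity
  -- At `a = 0` either value of `σ` works, since the displacement vanishes there.
  obtain ⟨σ, hσ, hσa, hra⟩ : ∃ σ : ℝ, σ * σ = 1 ∧ σ * |a| = a ∧
      r a = 1 + σ * (ε * (β + 1) * |a| / V) ^ ((1 : ℝ) / (β + 1)) := by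
    rcases lt_trichotomy a 0 with h | h | h
    · exact ⟨-1, by norm_num, by rw [abs_of_neg h]; ring, by rw [hr, Real.sign_of_neg h]⟩
    · refine ⟨1, by norm_num, by simp [h], ?_⟩
      rw [hr, h, abs_zero, mul_zero, zero_div, Real.zero_rpow (by positivity)]
      simp
    · exact ⟨1, by norm_num, by rw [abs_of_pos h]; ring, by rw [hr, Real.sign_of_pos h]⟩
  have hmain : S * |(∫ s in (1 : ℝ)..(r a), s * ρ s) - a|
      = S * (V / (ε * (β + 2))) * (ε * (β + 1) * |a| / V) ^ ((β + 2) / (β + 1)) := by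
    simp only [hρ]
    rw [hra, integral_mul_power_law_density hβ (Real.rpow_nonneg hy _) hσ,
      ← Real.rpow_mul hy, ← Real.rpow_mul hy, one_div_mul_cancel hb1.ne', Real.rpow_one,
      show 1 / (β + 1) * (β + 2) = (β + 2) / (β + 1) by ring]
    have hshares : V / ε * (ε * (β + 1) * |a| / V) / (β + 1) = |a| := by
      field_simp
    rw [hshares, hσa, add_sub_cancel_left, abs_of_nonneg (by positivity)]
    field_simp
  refine ⟨hmain, _, rfl, by positivity, ?_⟩
  have hexp : (β + 2) / (β + 1) = 1 + 1 / (β + 1) := by field_simp; ring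
  have hεp : ε ^ ((β + 2) / (β + 1)) = ε * ε ^ ((1 : ℝ) / (β + 1)) := by
    rw [hexp, Real.rpow_add hε, Real.rpow_one]
  have hVp : V ^ ((β + 2) / (β + 1)) = V * V ^ ((1 : ℝ) / (β + 1)) := by
    rw [hexp, Real.rpow_add hV, Real.rpow_one]
  have hVn : V ^ (-(1 : ℝ) / (β + 1)) = (V ^ ((1 : ℝ) / (β + 1)))⁻¹ := by
    rw [neg_div, Real.rpow_neg hV.le]
  have hVpos : 0 < V ^ ((1 : ℝ) / (β + 1)) := Real.rpow_pos_of_pos hV _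
  rw [hmain, Real.div_rpow (by positivity) hV.le, Real.mul_rpow (by positivity) (abs_nonneg a),
    Real.mul_rpow hε.le hb1.le, hεp, hVp, hVn]
  generalize V ^ ((1 : ℝ) / (β + 1)) = v at *
  generalize (β + 1) ^ ((β + 2) / (β + 1)) = b
  generalize |a| ^ ((β + 2) / (β + 1)) = A
  generalize ε ^ ((1 : ℝ) / (β + 1)) = e
  field_simp
end

section
/- Let β ≥ 0, let T ≥ 1 be an integer, let v_1, …, v_T be positive reals, and let x ∈ ℝ. Set p = (β+2)/(β+1). Then for all reals a_1, …, a_T with a_1 + ⋯ + a_T = x, one has ∑_{t=1}^T v_t^{−1/(β+1)} |a_t|^p ≥ |x|^p · (∑_{t=1}^T v_t)^{−1/(β+1)}, with equality attained by the volume-proportional allocation a_t = x·v_t/∑_{s=1}^T v_s; moreover, if x ≠ 0, equality holds only for this allocation. -/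
/-! The cost is a perspective function of `f y = |y| ^ p`: since `-1/(β+1) = 1 - p`,
one has `v ^ (-1/(β+1)) * |a| ^ p = v * f (a / v)` (`cost_eq_perspective`). With `V = ∑ v_t`, both
sides of the inequality are therefore `V` times the two sides of Jensen's inequality for `f`, with
weights `v_t / V` and points `a_t / v_t`, whose barycentre is `x / V`. As `p > 1`, the function `f`
is strictly convex on all of `ℝ` (`strictConvexOn_abs_rpow`), so equality forces every
`a_t / v_t` to equal `x / V`. -/

open Finset

lemma strictConvexOn_abs_rpow {p : ℝ} (hp : 1 < p) :
    StrictConvexOn ℝ Set.univ fun y : ℝ => |y| ^ p := by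
  have hp0 : 0 < p := by linarith
  refine ⟨convex_univ, fun y _ z _ hyz a b ha hb hab => ?_⟩
  simp only [smul_eq_mul]
  have htri : |a * y + b * z| ≤ a * |y| + b * |z| := by
    refine (abs_add_le _ _).trans_eq ?_
    rw [abs_mul, abs_mul, abs_of_pos ha, abs_of_pos hb]
  by_cases h : |y| = |z|
  · -- Here `z = -y ≠ 0`, and the strictness comes from cancellation inside the absolute value.
    have hzy : z = -y := by
      rcases abs_eq_abs.1 h with h | h
      · exact absurd h hyz
      · linarith
    have hy0 : y ≠ 0 := by
      rintro rfl
      exact hyz (by simp [hzy])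
    have hypos : 0 < |y| := abs_pos.2 hy0
    have hlt : |a * y + b * z| < |y| := by
      have : a * y + b * z = (a - b) * y := by rw [hzy]; ring
      rw [this, abs_mul]
      have hab' : |a - b| < 1 := abs_lt.2 ⟨by linarith, by linarith⟩
      nlinarith
    calc |a * y + b * z| ^ p < |y| ^ p := Real.rpow_lt_rpow (abs_nonneg _) hlt hp0
      _ = a * |y| ^ p + b * |z| ^ p := by rw [← h, ← add_mul, hab, one_mul]
  · calc |a * y + b * z| ^ p ≤ (a * |y| + b * |z|) ^ p :=
          Real.rpow_le_rpow (abs_nonneg _) htri hp0.le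
      _ < a * |y| ^ p + b * |z| ^ p :=
          (strictConvexOn_rpow hp).2 (abs_nonneg y) (abs_nonneg z) h ha hb hab

lemma cost_eq_perspective {β p v : ℝ} (hβ : 0 ≤ β) (hp : p = (β + 2) / (β + 1)) (hv : 0 < v)
    (a : ℝ) : v ^ (-(1 : ℝ) / (β + 1)) * |a| ^ p = v * |a / v| ^ p := by
  have hβ1 : β + 1 ≠ 0 := by linarith
  have hexp : -(1 : ℝ) / (β + 1) = 1 - p := by rw [hp]; field_simp; ring
  rw [hexp, Real.rpow_sub hv, Real.rpow_one, abs_div, abs_of_pos hv,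
    Real.div_rpow (abs_nonneg a) hv.le]
  ring

/-- **Deterministic optimal execution: volume-proportional allocation is optimal.**
For `β ≥ 0`, positive volumes `v_1, …, v_T` and total `x`, with `p = (β+2)/(β+1)`,
any allocation `a` with `∑ a_t = x` has cost
`∑ v_t^{−1/(β+1)} |a_t|^p ≥ |x|^p (∑ v_t)^{−1/(β+1)}`, with equality for the
volume-proportional allocation `a_t = x v_t / ∑ v_s`; if `x ≠ 0`, equality holds only
for this allocation. -/
theorem deterministic_vwap_allocation_optimal
    (β : ℝ) (hβ : 0 ≤ β) (T : ℕ) (hT : 1 ≤ T)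
    (v : Fin T → ℝ) (hv : ∀ t, 0 < v t) (x : ℝ)
    (p : ℝ) (hp : p = (β + 2) / (β + 1)) :
    (∀ a : Fin T → ℝ, (∑ t, a t) = x →
      |x| ^ p * (∑ t, v t) ^ (-(1 : ℝ) / (β + 1))
        ≤ ∑ t, (v t) ^ (-(1 : ℝ) / (β + 1)) * |a t| ^ p) ∧
    (∑ t, (v t) ^ (-(1 : ℝ) / (β + 1)) * |x * v t / ∑ s, v s| ^ p
        = |x| ^ p * (∑ t, v t) ^ (-(1 : ℝ) / (β + 1))) ∧
    (x ≠ 0 → ∀ a : Fin T → ℝ, (∑ t, a t) = x →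
      (∑ t, (v t) ^ (-(1 : ℝ) / (β + 1)) * |a t| ^ p
          = |x| ^ p * (∑ t, v t) ^ (-(1 : ℝ) / (β + 1))) →
      ∀ t, a t = x * v t / ∑ s, v s) := by
  have hβ1 : 0 < β + 1 := by linarith
  have hp1 : 1 < p := by rw [hp, one_lt_div hβ1]; linarith
  have hV : 0 < ∑ t, v t := Finset.sum_pos (fun t _ => hv t) ⟨⟨0, hT⟩, Finset.mem_univ _⟩
  have hcost : ∀ (t : Fin T) (b : ℝ),
      v t ^ (-(1 : ℝ) / (β + 1)) * |b| ^ p = v t * |b / v t| ^ p :=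
    fun t b => cost_eq_perspective hβ hp (hv t) b
  have hopt : |x| ^ p * (∑ t, v t) ^ (-(1 : ℝ) / (β + 1))
      = (∑ t, v t) * |x / ∑ t, v t| ^ p := by
    rw [mul_comm, cost_eq_perspective hβ hp hV]
  rw [hopt]
  simp only [hcost]
  set V := ∑ t, v t with hVdef
  have hconv := strictConvexOn_abs_rpow hp1
  have hw0 : ∀ t ∈ (Finset.univ : Finset (Fin T)), 0 < v t / V := fun t _ => div_pos (hv t) hV
  have hw1 : ∑ t, v t / V = 1 := by rw [← Finset.sum_div, ← hVdef, div_self hV.ne']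
  have hbary : ∀ a : Fin T → ℝ, ∑ t, a t = x → ∑ t, (v t / V) • (a t / v t) = x / V := by
    intro a ha
    rw [← ha, Finset.sum_div]
    refine Finset.sum_congr rfl fun t _ => ?_
    have := (hv t).ne'
    rw [smul_eq_mul]
    field_simp
  have hmean : ∀ a : Fin T → ℝ,
      ∑ t, (v t / V) • |a t / v t| ^ p = (∑ t, v t * |a t / v t| ^ p) / V := by
    intro a
    rw [Finset.sum_div]
    refine Finset.sum_congr rfl fun t _ => ?_
    rw [smul_eq_mul]
    ring
  refine ⟨fun a ha => ?_, ?_, fun _ a ha heq t => ?_⟩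
  · have hJ := hconv.convexOn.map_sum_le (p := fun t => a t / v t) (fun t ht => (hw0 t ht).le) hw1
      (fun t _ => Set.mem_univ _)
    simp only [hbary a ha, hmean a] at hJ
    rwa [le_div_iff₀ hV, mul_comm] at hJ
  · rw [hVdef, Finset.sum_mul, ← hVdef]
    refine Finset.sum_congr rfl fun t _ => ?_
    have hpoint : x * v t / V / v t = x / V := by
      have := (hv t).ne'
      field_simp
    rw [hpoint]
  · have hJ := (hconv.map_sum_eq_iff (p := fun t => a t / v t) hw0 hw1
      (fun t _ => Set.mem_univ _)).1
    simp only [hbary a ha, hmean a, heq] at hJ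
    have ht := hJ (by field_simp) t (Finset.mem_univ t)
    rw [div_eq_iff (hv t).ne'] at ht
    rw [ht]
    ring
end

section
/- (Proposition: Deterministic Volume — VWAP optimality.) Let (Ω, F, (F_t)_{t=0,…,T}, P) be a filtered probability space with T ≥ 1 an integer, let β ≥ 0, and let v_1, …, v_T be positive real (deterministic) volumes. Let (S_t)_{t=0,…,T} be a positive, integrable martingale with respect to (F_t). Fix x ∈ ℝ. Call a process (a_t)_{t=0,…,T−1} a policy if each a_t is F_t-measurable, ∑_{t=0}^{T−1} a_t = −x almost surely, and each random variable S_t·v_t^{−1/(β+1)}·|a_{t−1}|^{(β+2)/(β+1)} (t = 1, …, T) is integrable. Then the deterministic VWAP policy a*_t = −x·v_{t+1}/∑_{s=1}^T v_s satisfies E[∑_{t=1}^T S_t·v_t^{−1/(β+1)}·|a*_{t−1}|^{(β+2)/(β+1)}] ≤ E[∑_{t=1}^T S_t·v_t^{−1/(β+1)}·|a_{t−1}|^{(β+2)/(β+1)}] for every policy (a_t). -/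
/-!
Put `p = (β + 2) / (β + 1) ≥ 1`, so that `-1 / (β + 1) = 1 - p`. The martingale property lets
every price `S (t + 1)` be replaced by the terminal price `S T`: a nonnegative `ℱ t`-measurable
factor has the same expectation against both (`integral_mul_eq_of_setIntegral_eq`, applied to
`v (t + 1) ^ (1 - p) * |a t| ^ p`). The cost of a policy is therefore
`E[S T * ∑ t, v (t + 1) ^ (1 - p) * |a t| ^ p]`, and the sum can be minimized pathwise under
the constraint `∑ t, a t = -x`: Jensen's inequality for `z ↦ z ^ p` with weights proportional
to the volumes shows that the minimizer is the VWAP allocation (`vwap_pathwise`).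
-/

open MeasureTheory Finset

/-- If two nonnegative integrable variables have the same integral over every `m`-measurable set,
they have the same integral against every nonnegative `m`-measurable factor `g`. The measures
with densities `X` and `Y` agree on `m`, so no integrability of `Y * g` is needed a priori. -/
lemma integral_mul_eq_of_setIntegral_eq {Ω : Type*} {m mΩ : MeasurableSpace Ω} (hm : m ≤ mΩ)
    (μ : Measure Ω) {X Y g : Ω → ℝ} (hX : Integrable X μ) (hY : Integrable Y μ)
    (hX0 : ∀ ω, 0 ≤ X ω) (hY0 : ∀ ω, 0 ≤ Y ω)
    (hXm : Measurable X) (hYm : Measurable Y)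
    (hg : Measurable[m] g) (hg0 : ∀ ω, 0 ≤ g ω)
    (hXY : ∀ s, MeasurableSet[m] s → ∫ ω in s, X ω ∂μ = ∫ ω in s, Y ω ∂μ)
    (hXg : Integrable (fun ω => X ω * g ω) μ) :
    Integrable (fun ω => Y ω * g ω) μ ∧ ∫ ω, Y ω * g ω ∂μ = ∫ ω, X ω * g ω ∂μ := by
  have htrim : (μ.withDensity fun ω => ENNReal.ofReal (X ω)).trim hm
      = (μ.withDensity fun ω => ENNReal.ofReal (Y ω)).trim hm := by
    refine @Measure.ext _ m _ _ fun s hs => ?_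
    rw [trim_measurableSet_eq hm hs, trim_measurableSet_eq hm hs,
      withDensity_apply _ (hm s hs), withDensity_apply _ (hm s hs),
      ← ofReal_integral_eq_lintegral_ofReal hX.integrableOn (ae_of_all _ hX0),
      ← ofReal_integral_eq_lintegral_ofReal hY.integrableOn (ae_of_all _ hY0), hXY s hs]
  have hgm : Measurable g := hg.mono hm le_rfl
  have key : ∀ Z : Ω → ℝ, Measurable Z → (∀ ω, 0 ≤ Z ω) →
      ∫⁻ ω, ENNReal.ofReal (Z ω * g ω) ∂μ
        = ∫⁻ ω, ENNReal.ofReal (g ω)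
            ∂((μ.withDensity fun ω => ENNReal.ofReal (Z ω)).trim hm) := by
    intro Z hZ hZ0
    rw [lintegral_trim hm hg.ennreal_ofReal,
      lintegral_withDensity_eq_lintegral_mul _ hZ.ennreal_ofReal hgm.ennreal_ofReal]
    refine lintegral_congr fun ω => ?_
    simp only [Pi.mul_apply]
    rw [ENNReal.ofReal_mul (hZ0 ω)]
  have hlin : ∫⁻ ω, ENNReal.ofReal (Y ω * g ω) ∂μ = ∫⁻ ω, ENNReal.ofReal (X ω * g ω) ∂μ := by
    rw [key X hXm hX0, key Y hYm hY0, htrim]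
  have hXg0 : ∀ ω, 0 ≤ X ω * g ω := fun ω => mul_nonneg (hX0 ω) (hg0 ω)
  have hYg0 : ∀ ω, 0 ≤ Y ω * g ω := fun ω => mul_nonneg (hY0 ω) (hg0 ω)
  refine ⟨⟨(hYm.mul hgm).aestronglyMeasurable, ?_⟩, ?_⟩
  · rw [hasFiniteIntegral_iff_ofReal (ae_of_all _ hYg0), hlin,
      ← hasFiniteIntegral_iff_ofReal (ae_of_all _ hXg0)]
    exact hXg.hasFiniteIntegral
  · rw [integral_eq_lintegral_of_nonneg_ae (ae_of_all _ hYg0)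
        (hYm.mul hgm).aestronglyMeasurable, hlin,
      integral_eq_lintegral_of_nonneg_ae (ae_of_all _ hXg0) hXg.aestronglyMeasurable]

/-- Deterministic optimality of the allocation proportional to `w`, by Jensen's inequality for
`z ↦ z ^ p` with weights `w i / ∑ j, w j` at the points `|b i| / w i`. -/
lemma vwap_pathwise {ι : Type*} (s : Finset ι) (hs : s.Nonempty) (w b : ι → ℝ)
    (hw : ∀ i ∈ s, 0 < w i) {p : ℝ} (hp : 1 ≤ p) (x : ℝ) (hb : ∑ i ∈ s, b i = -x) :
    ∑ i ∈ s, w i ^ (1 - p) * |(-x * w i / ∑ j ∈ s, w j)| ^ p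
      ≤ ∑ i ∈ s, w i ^ (1 - p) * |b i| ^ p := by
  set V := ∑ j ∈ s, w j with hV
  have hV0 : 0 < V := Finset.sum_pos hw hs
  have hJ := Real.rpow_arith_mean_le_arith_mean_rpow s (fun i => w i / V) (fun i => |b i| / w i)
    (fun i hi => (div_pos (hw i hi) hV0).le)
    (by rw [← Finset.sum_div, ← hV, div_self hV0.ne'])
    (fun i hi => div_nonneg (abs_nonneg _) (hw i hi).le) hp
  have hpow : ∀ i ∈ s, ∀ z : ℝ, 0 ≤ z → w i ^ (1 - p) * z ^ p = w i * (z / w i) ^ p := by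
    intro i hi z hz
    have := Real.rpow_pos_of_pos (hw i hi) p
    rw [Real.div_rpow hz (hw i hi).le, Real.rpow_sub (hw i hi), Real.rpow_one]
    field_simp
  have hL : ∑ i ∈ s, w i ^ (1 - p) * |(-x * w i / V)| ^ p = V * (|x| / V) ^ p := by
    rw [hV, Finset.sum_mul, ← hV]
    refine Finset.sum_congr rfl fun i hi => ?_
    have hwi := hw i hi
    rw [hpow i hi _ (abs_nonneg _), abs_div, abs_mul, abs_neg, abs_of_pos hwi, abs_of_pos hV0]
    congr 2
    field_simp
  have hR : ∑ i ∈ s, w i ^ (1 - p) * |b i| ^ p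
      = V * ∑ i ∈ s, w i / V * (|b i| / w i) ^ p := by
    rw [Finset.mul_sum]
    refine Finset.sum_congr rfl fun i hi => ?_
    rw [hpow i hi _ (abs_nonneg _)]
    field_simp
  have hM : ∑ i ∈ s, w i / V * (|b i| / w i) = (∑ i ∈ s, |b i|) / V := by
    rw [Finset.sum_div]
    refine Finset.sum_congr rfl fun i hi => ?_
    have hwi := hw i hi
    field_simp
  have hx : |x| ≤ ∑ i ∈ s, |b i| := by
    rw [← abs_neg, ← hb]
    exact Finset.abs_sum_le_sum_abs _ _
  rw [hL, hR]
  refine mul_le_mul_of_nonneg_left (le_trans ?_ hJ) hV0.le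
  rw [hM]
  exact Real.rpow_le_rpow (by positivity) (by gcongr) (by linarith)

/-- **Proposition (Deterministic Volume): the VWAP strategy is optimal.**
On a filtered probability space, with deterministic positive volumes `v_1, …, v_T`, a positive
integrable martingale price process `S`, and initial inventory `x`, the deterministic VWAP
policy `a*_t = −x·v_{t+1}/∑_{s=1}^T v_s` minimizes the expected transaction cost
`E[∑_{t=1}^T S_t · v_t^{−1/(β+1)} · |a_{t−1}|^{(β+2)/(β+1)}]` over all adapted policies
liquidating the inventory. -/
theorem vwap_optimal_deterministic_volume
    {Ω : Type*} {mΩ : MeasurableSpace Ω} (μ : Measure Ω) [IsProbabilityMeasure μ]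
    (ℱ : Filtration ℕ mΩ) (T : ℕ) (hT : 1 ≤ T) (β : ℝ) (hβ : 0 ≤ β)
    (v : ℕ → ℝ) (hv : ∀ t, 1 ≤ t → t ≤ T → 0 < v t)
    (S : ℕ → Ω → ℝ)
    (hS_pos : ∀ t, t ≤ T → ∀ ω, 0 < S t ω)
    (hS_int : ∀ t, t ≤ T → Integrable (S t) μ)
    (hS_adapted : ∀ t, t ≤ T → StronglyMeasurable[ℱ t] (S t))
    (hS_mart : ∀ t, t < T → μ[S (t + 1)|ℱ t] =ᵐ[μ] S t)
    (x : ℝ) :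
    ∀ a : ℕ → Ω → ℝ,
      (∀ t, t < T → StronglyMeasurable[ℱ t] (a t)) →
      (∀ᵐ ω ∂μ, (∑ t ∈ Finset.range T, a t ω) = -x) →
      (∀ t, t < T → Integrable
        (fun ω => S (t + 1) ω * v (t + 1) ^ (-(1 : ℝ) / (β + 1)) *
          |a t ω| ^ ((β + 2) / (β + 1))) μ) →
      (∫ ω, (∑ t ∈ Finset.range T,
          S (t + 1) ω * v (t + 1) ^ (-(1 : ℝ) / (β + 1)) *
            |(-x * v (t + 1) / ∑ s ∈ Finset.Icc 1 T, v s)| ^ ((β + 2) / (β + 1))) ∂μ)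
        ≤ ∫ ω, (∑ t ∈ Finset.range T,
            S (t + 1) ω * v (t + 1) ^ (-(1 : ℝ) / (β + 1)) *
              |a t ω| ^ ((β + 2) / (β + 1))) ∂μ := by
  intro a ha hsum hint
  set p : ℝ := (β + 2) / (β + 1) with hp
  have hβ1 : 0 < β + 1 := by linarith
  have hexp : -(1 : ℝ) / (β + 1) = 1 - p := by rw [hp]; field_simp; ring
  have hp1 : 1 ≤ p := by rw [hp, le_div_iff₀ hβ1]; linarith
  have hV : ∑ s ∈ Finset.Icc 1 T, v s = ∑ t ∈ Finset.range T, v (t + 1) := by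
    rw [Finset.range_eq_Ico, Finset.sum_Ico_add' v 0 T 1]
    rfl
  simp only [hexp, hV, mul_assoc] at hint ⊢
  set V := ∑ t ∈ Finset.range T, v (t + 1) with hVdef
  have hmeas : ∀ t, t ≤ T → Measurable (S t) := fun t ht =>
    ((hS_adapted t ht).mono (ℱ.le t)).measurable
  have hset : ∀ t s, MeasurableSet[ℱ t] s → ∀ k, t ≤ k → k ≤ T →
      ∫ ω in s, S k ω ∂μ = ∫ ω in s, S t ω ∂μ := by
    intro t s hs k htk
    induction k, htk using Nat.le_induction with
    | base => intro _; rfl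
    | succ k htk ih =>
      intro hk
      rw [← ih (by omega), ← setIntegral_condExp (ℱ.le k) (hS_int _ hk) (ℱ.mono htk s hs)]
      exact integral_congr_ae (ae_restrict_of_ae (hS_mart k (by omega)))
  -- Any nonnegative `ℱ t`-measurable factor may be priced at time `T` instead of `t + 1`.
  have hswap : ∀ t, t < T → ∀ g : Ω → ℝ, Measurable[ℱ t] g → (∀ ω, 0 ≤ g ω) →
      Integrable (fun ω => S (t + 1) ω * g ω) μ →
      Integrable (fun ω => S T ω * g ω) μ ∧
        ∫ ω, S T ω * g ω ∂μ = ∫ ω, S (t + 1) ω * g ω ∂μ := by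
    intro t ht g hg hg0 hgi
    refine integral_mul_eq_of_setIntegral_eq (ℱ.le t) μ (hS_int _ ht) (hS_int T le_rfl)
      (fun ω => (hS_pos _ ht ω).le) (fun ω => (hS_pos T le_rfl ω).le)
      (hmeas _ ht) (hmeas T le_rfl) hg hg0 (fun s hs => ?_) hgi
    rw [hset t s hs (t + 1) (by omega) ht, hset t s hs T ht.le le_rfl]
  have hv0 : ∀ t ∈ Finset.range T, 0 < v (t + 1) := fun t ht =>
    hv _ (by omega) (by have := Finset.mem_range.1 ht; omega)
  have hcost : ∀ b : ℕ → Ω → ℝ, (∀ t, t < T → Measurable[ℱ t] (b t)) →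
      (∀ t, t < T → Integrable
        (fun ω => S (t + 1) ω * (v (t + 1) ^ (1 - p) * |b t ω| ^ p)) μ) →
      Integrable (fun ω => S T ω * ∑ t ∈ Finset.range T, v (t + 1) ^ (1 - p) * |b t ω| ^ p) μ ∧
      ∫ ω, ∑ t ∈ Finset.range T, S (t + 1) ω * (v (t + 1) ^ (1 - p) * |b t ω| ^ p) ∂μ
        = ∫ ω, S T ω * ∑ t ∈ Finset.range T, v (t + 1) ^ (1 - p) * |b t ω| ^ p ∂μ := by
    intro b hb hbi
    have h : ∀ t ∈ Finset.range T, _ := fun t ht =>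
      hswap t (Finset.mem_range.1 ht) (fun ω => v (t + 1) ^ (1 - p) * |b t ω| ^ p)
        (((continuous_abs.measurable.comp (hb t (Finset.mem_range.1 ht))).pow_const p).const_mul _)
        (fun ω => mul_nonneg (Real.rpow_nonneg (hv0 t ht).le _)
          (Real.rpow_nonneg (abs_nonneg _) _)) (hbi t (Finset.mem_range.1 ht))
    simp only [Finset.mul_sum]
    refine ⟨integrable_finsetSum _ fun t ht => (h t ht).1, ?_⟩
    rw [integral_finsetSum _ fun t ht => hbi t (Finset.mem_range.1 ht),
      integral_finsetSum _ fun t ht => (h t ht).1]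
    exact Finset.sum_congr rfl fun t ht => (h t ht).2.symm
  obtain ⟨hi₁, he₁⟩ := hcost (fun t _ => -x * v (t + 1) / V) (fun t _ => measurable_const)
    (fun t ht => (hS_int (t + 1) ht).mul_const _)
  obtain ⟨hi₂, he₂⟩ := hcost a (fun t ht => (ha t ht).measurable) hint
  simp only [mul_div_assoc, neg_mul] at he₁ hi₁ ⊢
  rw [he₁, he₂]
  refine integral_mono_ae hi₁ hi₂ ?_
  filter_upwards [hsum] with ω hω
  refine mul_le_mul_of_nonneg_left ?_ (hS_pos T le_rfl ω).le
  have := vwap_pathwise (Finset.range T) (Finset.nonempty_range_iff.2 (by omega))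
    (fun t => v (t + 1)) (fun t => a t ω) hv0 hp1 x hω
  simpa only [mul_div_assoc, neg_mul] using this
end

section
/- (Proposition: Deterministic constant volume — TWAP optimality.) Let (Ω, F, (F_t)_{t=0,…,T}, P) be a filtered probability space with T ≥ 1 an integer, let β ≥ 0, and let v > 0 be a constant volume, i.e., v_t = v for t = 1, …, T. Let (S_t)_{t=0,…,T} be a positive, integrable martingale with respect to (F_t). Fix x ∈ ℝ. Call a process (a_t)_{t=0,…,T−1} a policy if each a_t is F_t-measurable, ∑_{t=0}^{T−1} a_t = −x almost surely, and each random variable S_t·v^{−1/(β+1)}·|a_{t−1}|^{(β+2)/(β+1)} (t = 1, …, T) is integrable. Then the TWAP policy a*_t = −x/T satisfies E[∑_{t=1}^T S_t·v^{−1/(β+1)}·|a*_{t−1}|^{(β+2)/(β+1)}] ≤ E[∑_{t=1}^T S_t·v^{−1/(β+1)}·|a_{t−1}|^{(β+2)/(β+1)}] for every policy (a_t). -/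
/-!
Because the martingale property gives `E[S_{t+1} | ℱ_t] = S_t = E[S_T | ℱ_t]` and `a_t` is
`ℱ_t`-measurable, every price `S_{t+1}` in the expected cost can be replaced by the terminal price
`S_T` (`integral_mul_eq_of_condExp_eq`). The cost then becomes, up to a constant, the expectation
of `S_T · ∑ |a_t|^p` with `p = (β+2)/(β+1) ≥ 1`, which is minimized pointwise by equal suborders
thanks to the power-mean inequality (`card_mul_abs_div_rpow_le`).
-/

open MeasureTheory Finset

/-- Two nonnegative integrable variables with the same conditional expectation given `m` have the
same integral against any `m`-measurable weight with values in `[0, ∞]`: as densities, they define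
the same measure on `m`. -/
lemma lintegral_mul_eq_of_condExp_eq {Ω : Type*} {m mΩ : MeasurableSpace Ω} (μ : Measure Ω)
    [IsProbabilityMeasure μ] (hm : m ≤ mΩ) {X Y : Ω → ℝ}
    (hX : Integrable X μ) (hY : Integrable Y μ) (hX0 : ∀ ω, 0 ≤ X ω) (hY0 : ∀ ω, 0 ≤ Y ω)
    (h : μ[X|m] =ᵐ[μ] μ[Y|m]) {g : Ω → ENNReal} (hg : Measurable[m] g) :
    ∫⁻ ω, ENNReal.ofReal (X ω) * g ω ∂μ = ∫⁻ ω, ENNReal.ofReal (Y ω) * g ω ∂μ := by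
  have key : (μ.withDensity fun ω => ENNReal.ofReal (X ω)).trim hm
      = (μ.withDensity fun ω => ENNReal.ofReal (Y ω)).trim hm := by
    refine @Measure.ext _ m _ _ fun A hA => ?_
    rw [trim_measurableSet_eq hm hA, trim_measurableSet_eq hm hA,
      withDensity_apply _ (hm A hA), withDensity_apply _ (hm A hA),
      ← ofReal_integral_eq_lintegral_ofReal hX.integrableOn (ae_of_all _ hX0),
      ← ofReal_integral_eq_lintegral_ofReal hY.integrableOn (ae_of_all _ hY0),
      ← setIntegral_condExp hm hX hA, ← setIntegral_condExp hm hY hA,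
      integral_congr_ae (ae_restrict_of_ae h)]
  have hgm : Measurable g := hg.mono hm le_rfl
  have e1 := lintegral_withDensity_eq_lintegral_mul₀ hX.aemeasurable.ennreal_ofReal
    hgm.aemeasurable
  have e2 := lintegral_withDensity_eq_lintegral_mul₀ hY.aemeasurable.ennreal_ofReal
    hgm.aemeasurable
  simp only [Pi.mul_apply] at e1 e2
  rw [← e1, ← e2, ← lintegral_trim hm hg, ← lintegral_trim hm hg, key]

/-- The real-valued form of `lintegral_mul_eq_of_condExp_eq`. Integrability against `Y` is
part of the conclusion; the weight `g` need not be bounded. -/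
lemma integral_mul_eq_of_condExp_eq {Ω : Type*} {m mΩ : MeasurableSpace Ω} (μ : Measure Ω)
    [IsProbabilityMeasure μ] (hm : m ≤ mΩ) {X Y : Ω → ℝ}
    (hX : Integrable X μ) (hY : Integrable Y μ) (hX0 : ∀ ω, 0 ≤ X ω) (hY0 : ∀ ω, 0 ≤ Y ω)
    (h : μ[X|m] =ᵐ[μ] μ[Y|m]) {g : Ω → ℝ} (hg : Measurable[m] g) (hg0 : ∀ ω, 0 ≤ g ω)
    (hXg : Integrable (fun ω => X ω * g ω) μ) :
    Integrable (fun ω => Y ω * g ω) μ ∧ ∫ ω, X ω * g ω ∂μ = ∫ ω, Y ω * g ω ∂μ := by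
  have hl := lintegral_mul_eq_of_condExp_eq μ hm hX hY hX0 hY0 h hg.ennreal_ofReal
  simp only [← ENNReal.ofReal_mul (hX0 _), ← ENNReal.ofReal_mul (hY0 _)] at hl
  have hYm : AEStronglyMeasurable (fun ω => Y ω * g ω) μ :=
    hY.aestronglyMeasurable.mul (hg.mono hm le_rfl).aestronglyMeasurable
  have hXg0 : 0 ≤ᵐ[μ] fun ω => X ω * g ω := ae_of_all _ fun ω => mul_nonneg (hX0 ω) (hg0 ω)
  have hYg0 : 0 ≤ᵐ[μ] fun ω => Y ω * g ω := ae_of_all _ fun ω => mul_nonneg (hY0 ω) (hg0 ω)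
  refine ⟨⟨hYm, ?_⟩, ?_⟩
  · rw [hasFiniteIntegral_iff_ofReal hYg0, ← hl]
    exact (hasFiniteIntegral_iff_ofReal hXg0).1 hXg.2
  · rw [integral_eq_lintegral_of_nonneg_ae hXg0 hXg.1,
      integral_eq_lintegral_of_nonneg_ae hYg0 hYm, hl]

/-- Power-mean inequality: among `T` numbers with a given sum, equal ones minimize the sum of
`p`-th powers of absolute values. -/
lemma card_mul_abs_div_rpow_le {T : ℕ} (hT : 1 ≤ T) {p : ℝ} (hp : 1 ≤ p) (f : ℕ → ℝ) {y : ℝ}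
    (hf : ∑ t ∈ range T, f t = y) :
    (T : ℝ) * |y / T| ^ p ≤ ∑ t ∈ range T, |f t| ^ p := by
  have hT0 : (0 : ℝ) < T := by exact_mod_cast hT
  have h1 := Real.rpow_sum_le_const_mul_sum_rpow (range T) f hp
  rw [card_range] at h1
  have h2 : |y| ^ p ≤ (∑ t ∈ range T, |f t|) ^ p := by
    rw [← hf]
    exact Real.rpow_le_rpow (abs_nonneg _) (abs_sum_le_sum_abs _ _) (by linarith)
  have h3 : (T : ℝ) ^ (p - 1) * T = (T : ℝ) ^ p := by
    rw [Real.rpow_sub_one hT0.ne']; field_simp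
  have hTp : (0 : ℝ) < (T : ℝ) ^ p := Real.rpow_pos_of_pos hT0 _
  rw [abs_div, abs_of_pos hT0, Real.div_rpow (abs_nonneg _) hT0.le, mul_div_assoc',
    div_le_iff₀ hTp, ← h3]
  calc (T : ℝ) * |y| ^ p ≤ T * ((T : ℝ) ^ (p - 1) * ∑ t ∈ range T, |f t| ^ p) := by
        gcongr; exact h2.trans h1
    _ = _ := by ring

/-- **Proposition (Deterministic constant volume): the TWAP strategy is optimal.**
On a filtered probability space, with constant deterministic volume `v > 0`, a positive
integrable martingale price process `S`, and initial inventory `x`, the TWAP policy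
`a*_t = −x/T` minimizes the expected transaction cost
`E[∑_{t=1}^T S_t · v^{−1/(β+1)} · |a_{t−1}|^{(β+2)/(β+1)}]` over all adapted policies
liquidating the inventory. -/
theorem twap_optimal_constant_volume
    {Ω : Type*} {mΩ : MeasurableSpace Ω} (μ : Measure Ω) [IsProbabilityMeasure μ]
    (ℱ : Filtration ℕ mΩ) (T : ℕ) (hT : 1 ≤ T) (β : ℝ) (hβ : 0 ≤ β)
    (v : ℝ) (hv : 0 < v)
    (S : ℕ → Ω → ℝ)
    (hS_pos : ∀ t, t ≤ T → ∀ ω, 0 < S t ω)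
    (hS_int : ∀ t, t ≤ T → Integrable (S t) μ)
    (hS_adapted : ∀ t, t ≤ T → StronglyMeasurable[ℱ t] (S t))
    (hS_mart : ∀ t, t < T → μ[S (t + 1)|ℱ t] =ᵐ[μ] S t)
    (x : ℝ) :
    ∀ a : ℕ → Ω → ℝ,
      (∀ t, t < T → StronglyMeasurable[ℱ t] (a t)) →
      (∀ᵐ ω ∂μ, (∑ t ∈ Finset.range T, a t ω) = -x) →
      (∀ t, t < T → Integrable
        (fun ω => S (t + 1) ω * v ^ (-(1 : ℝ) / (β + 1)) *
          |a t ω| ^ ((β + 2) / (β + 1))) μ) →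
      (∫ ω, (∑ t ∈ Finset.range T,
          S (t + 1) ω * v ^ (-(1 : ℝ) / (β + 1)) *
            |(-x / (T : ℝ))| ^ ((β + 2) / (β + 1))) ∂μ)
        ≤ ∫ ω, (∑ t ∈ Finset.range T,
            S (t + 1) ω * v ^ (-(1 : ℝ) / (β + 1)) *
              |a t ω| ^ ((β + 2) / (β + 1))) ∂μ := by
  intro a ha hsum hint
  set c : ℝ := v ^ (-(1 : ℝ) / (β + 1)) with hc
  set p : ℝ := (β + 2) / (β + 1) with hp
  have hc0 : 0 ≤ c := Real.rpow_nonneg hv.le _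
  have hp1 : 1 ≤ p := by rw [hp, le_div_iff₀ (by linarith)]; linarith
  -- The tower property closes the one-step martingale identity backwards from `T`.
  have hclosed : ∀ t, t ≤ T → μ[S T|ℱ t] =ᵐ[μ] S t := by
    intro t ht
    induction ht using Nat.decreasingInduction with
    | self =>
      rw [condExp_of_stronglyMeasurable (ℱ.le T) (hS_adapted T le_rfl) (hS_int T le_rfl)]
    | of_succ k hk ih =>
      exact (condExp_condExp_of_le (ℱ.mono k.le_succ) (ℱ.le _)).symm.trans
        ((condExp_congr_ae ih).trans (hS_mart k hk))
  have hswap : ∀ t, t < T → ∀ g : Ω → ℝ, Measurable[ℱ t] g → (∀ ω, 0 ≤ g ω) →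
      Integrable (fun ω => S (t + 1) ω * g ω) μ →
      Integrable (fun ω => S T ω * g ω) μ ∧
        ∫ ω, S (t + 1) ω * g ω ∂μ = ∫ ω, S T ω * g ω ∂μ := by
    intro t ht g hg hg0 hi
    exact integral_mul_eq_of_condExp_eq μ (ℱ.le t) (hS_int _ ht) (hS_int _ le_rfl)
      (fun ω => (hS_pos _ ht ω).le) (fun ω => (hS_pos _ le_rfl ω).le)
      ((hS_mart t ht).trans (hclosed t ht.le).symm) hg hg0 hi
  simp only [mul_assoc] at hint ⊢
  have hintc : ∀ t, t < T → Integrable (fun ω => S (t + 1) ω * (c * |-x / (T : ℝ)| ^ p)) μ :=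
    fun t ht => (hS_int _ ht).mul_const _
  have hA : ∀ t, t < T → _ := fun t ht => hswap t ht (fun ω => c * |a t ω| ^ p)
    (((measurable_norm.comp (ha t ht).measurable).pow_const p).const_mul c)
    (fun ω => by positivity) (hint t ht)
  have hC : ∀ t, t < T → _ := fun t ht => hswap t ht (fun _ => c * |-x / (T : ℝ)| ^ p)
    measurable_const (fun ω => by positivity) (hintc t ht)
  rw [integral_finsetSum _ fun t ht => hintc t (mem_range.1 ht),
    integral_finsetSum _ fun t ht => hint t (mem_range.1 ht),
    sum_congr rfl fun t ht => (hC t (mem_range.1 ht)).2,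
    sum_congr rfl fun t ht => (hA t (mem_range.1 ht)).2,
    ← integral_finsetSum _ fun t ht => (hC t (mem_range.1 ht)).1,
    ← integral_finsetSum _ fun t ht => (hA t (mem_range.1 ht)).1]
  refine integral_mono_ae (integrable_finsetSum _ fun t ht => (hC t (mem_range.1 ht)).1)
    (integrable_finsetSum _ fun t ht => (hA t (mem_range.1 ht)).1) ?_
  filter_upwards [hsum] with ω hω
  have hj := card_mul_abs_div_rpow_le hT hp1 (fun t => a t ω) hω
  have hS0 := (hS_pos T le_rfl ω).le
  simp only [← mul_sum, sum_const, card_range, nsmul_eq_mul]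
  gcongr
end
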